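/- Let A = (a_{ij}), C ∈ ^cΞ with ro(A) = co(C), and suppose that C − R·E^θ_{h+1,h} is a diagonal matrix for some h with 1 ≤ h ≤ r−1 and some R ∈ ℕ. Then, as functions on X_c × X_c, e_C ∗ e_A = Σ_t q^{Σ_{(j,u): j < u} a_{h+1,j} t_u} · (Π_{u=1}^{𝔫} [a_{h+1,u} + t_u ; t_u]_q) · e_{A − Σ_{u=1}^{𝔫} t_u (E^θ_{h,u} − E^θ_{h+1,u})}, where the sum is over all t = (t_1, …, t_𝔫) ∈ ℕ^𝔫 with Σ_{u=1}^{𝔫} t_u = R and t_u ≤ a_{hu} for all u. -/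

import Mathlib

open scoped Classical

noncomputable section

namespace FlagC

variable {k V : Type*} [Field k] [AddCommGroup V] [Module k V]

/-- The orthogonal complement `{v | ∀ u ∈ N, Φ u v = 0}` of a submodule with respect to a
bilinear form. -/
def perpB (Φ : V →ₗ[k] V →ₗ[k] k) (N : Submodule k V) : Submodule k V where
  carrier := {v | ∀ u ∈ N, Φ u v = 0}
  zero_mem' := fun u _ => map_zero (Φ u)
  add_mem' := fun {a b} ha hb u hu => by rw [map_add, ha u hu, hb u hu, add_zero]
  smul_mem' := fun c v hv u hu => by rw [map_smul, hv u hu, smul_zero]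

/-- A complete isotropic flag of type `C`:  `0 = L 0 ⊆ L 1 ⊆ ⋯ ⊆ L nn = V` with
`L (nn - i) = (L i)^⊥`.  (The values `L i` for `i > nn` are required to equal `⊤` so that a
flag is determined by finitely many submodules.) -/
def IsFlag (Φ : V →ₗ[k] V →ₗ[k] k) (nn : ℕ) (L : ℕ → Submodule k V) : Prop :=
  L 0 = ⊥ ∧ (∀ i, L i ≤ L (i + 1)) ∧ (∀ i, nn ≤ i → L i = ⊤) ∧
    ∀ i, i ≤ nn → L (nn - i) = perpB Φ (L i)

/-- The set `X_c` of complete isotropic flags. -/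
def Flags (Φ : V →ₗ[k] V →ₗ[k] k) (nn : ℕ) := {L : ℕ → Submodule k V // IsFlag Φ nn L}

/-- `dim_k (p / s)`, the dimension of the quotient of `p` by `s ∩ p`. -/
def relDim (p s : Submodule k V) : ℕ :=
  Module.finrank k (↥p ⧸ (s.comap p.subtype))

/-- The characteristic function `e_A` of the orbit `O_A`: the set of pairs of flags `(L, L′)`
with `dim_k (Lᵢ ∩ L′ⱼ)/(L_{i-1} ∩ L′ⱼ + Lᵢ ∩ L′_{j-1}) = A i j` for all `1 ≤ i, j ≤ nn`. -/
def eMat (Φ : V →ₗ[k] V →ₗ[k] k) (nn : ℕ) (A : ℕ → ℕ → ℤ) :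
    Flags Φ nn × Flags Φ nn → ℚ := fun LL =>
  if ∀ i ∈ Finset.Icc 1 nn, ∀ j ∈ Finset.Icc 1 nn,
      (relDim ((LL.1.1 i) ⊓ (LL.2.1 j))
        (((LL.1.1 (i - 1)) ⊓ (LL.2.1 j)) ⊔ ((LL.1.1 i) ⊓ (LL.2.1 (j - 1)))) : ℤ) = A i j
  then 1 else 0

/-- Convolution product of functions on `X_c × X_c`. -/
def conv (Φ : V →ₗ[k] V →ₗ[k] k) (nn : ℕ)
    (f g : Flags Φ nn × Flags Φ nn → ℚ) : Flags Φ nn × Flags Φ nn → ℚ :=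
  fun LL => ∑ᶠ L' : Flags Φ nn, f (LL.1, L') * g (L', LL.2)

/-- Membership in `^cΞ`: an `nn × nn` matrix of natural numbers (recorded as an
integer-valued function on `[1,nn] × [1,nn]`) with total sum `2d` and with
`a_{ij} = a_{nn+1-i, nn+1-j}`. -/
def MemXiC (nn d : ℕ) (A : ℕ → ℕ → ℤ) : Prop :=
  (∀ i ∈ Finset.Icc 1 nn, ∀ j ∈ Finset.Icc 1 nn, 0 ≤ A i j) ∧
  (∑ i ∈ Finset.Icc 1 nn, ∑ j ∈ Finset.Icc 1 nn, A i j) = 2 * d ∧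
  ∀ i ∈ Finset.Icc 1 nn, ∀ j ∈ Finset.Icc 1 nn, A i j = A (nn + 1 - i) (nn + 1 - j)

/-- Row sums. -/
def roM (nn : ℕ) (A : ℕ → ℕ → ℤ) (i : ℕ) : ℤ := ∑ j ∈ Finset.Icc 1 nn, A i j

/-- Column sums. -/
def coM (nn : ℕ) (A : ℕ → ℕ → ℤ) (j : ℕ) : ℤ := ∑ i ∈ Finset.Icc 1 nn, A i j

/-- `E^θ_{ij} = E_{ij} + E_{nn+1-i, nn+1-j}`. -/
def Eth (nn i j : ℕ) : ℕ → ℕ → ℤ := fun a b =>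
  (if a = i ∧ b = j then 1 else 0) + (if a = nn + 1 - i ∧ b = nn + 1 - j then 1 else 0)

/-- The Gaussian binomial coefficient `[m; t]_q = ∏_{i=1}^{t} (q^{m-i+1} - 1)/(q^i - 1)`. -/
def qbinom (q : ℚ) (m : ℤ) (t : ℕ) : ℚ :=
  ∏ i ∈ Finset.Icc 1 t, (q ^ (m - (i : ℤ) + 1) - 1) / (q ^ (i : ℤ) - 1)

end FlagC

open FlagC

/-!
Two flags `L`, `L'` are in relative position `C` exactly when `L'` arises from `L` by enlarging
the `h`-th step, by `R` dimensions and within the `(h + 1)`-st step, and shrinking the orthogonal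
`(n - h)`-th step accordingly. The flags `L'` that contribute to `e_C ∗ e_A` at `(L, F)` therefore
correspond to the subspaces `T` between `L h` and `L (h + 1)`. The position of such a `T` with
respect to `F` is recorded by the dimensions `t u` by which `T ∩ F u` outgrows `L h ∩ F u` at
the step `u`, and these dimensions determine the relative position of `L` and `F` from that of
`L'` and `F`. Building the subspaces `T` with given jumps step by step along `F` produces a
Gaussian binomial coefficient and a power of `q` at each step.
-/

namespace FlagC

open Module Finset

/-! ### Gaussian binomials and counting subspaces -/

theorem qbinom_mul_prod {q : ℚ} (hq : 1 < q) (m : ℤ) (t : ℕ) :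
    qbinom q m t * ∏ i ∈ range t, (q ^ ((t : ℤ) - i) - 1) = ∏ i ∈ range t, (q ^ (m - i) - 1) := by
  have hden : ∏ i ∈ range t, (q ^ ((t : ℤ) - i) - 1) = ∏ i ∈ range t, (q ^ ((i : ℤ) + 1) - 1) := by
    rw [← prod_range_reflect]
    refine prod_congr rfl fun i hi => ?_
    have := mem_range.1 hi
    congr 2
    omega
  have hne : ∏ i ∈ range t, (q ^ ((i : ℤ) + 1) - 1) ≠ 0 := prod_ne_zero_iff.2 fun i _ =>
    (sub_pos.2 (one_lt_zpow₀ hq (by omega))).ne'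
  have hnum : qbinom q m t = ∏ i ∈ range t, (q ^ (m - i) - 1) / (q ^ ((i : ℤ) + 1) - 1) := by
    rw [qbinom, ← Ico_add_one_right_eq_Icc, prod_Ico_eq_prod_range, Nat.add_sub_cancel]
    refine prod_congr rfl fun i _ => ?_
    push_cast
    congr 3 <;> ring
  rw [hnum, hden, prod_div_distrib, div_mul_cancel₀ _ hne]

theorem prod_zpow_sub_zpow {q : ℚ} (hq : 1 < q) (g f e : ℤ) (t : ℕ) :
    ∏ i ∈ range t, (q ^ g - q ^ (f + i)) =
      qbinom q (g - f) t * q ^ ((f - e) * t) * ∏ i ∈ range t, (q ^ (e + t) - q ^ (e + i)) := by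
  have hq0 : q ≠ 0 := (zero_lt_one.trans hq).ne'
  have hfactor (b c : ℤ) : ∏ i ∈ range t, (q ^ b - q ^ (c + i)) =
      q ^ (c * t) * (∏ i ∈ range t, q ^ (i : ℤ)) * ∏ i ∈ range t, (q ^ (b - c - i) - 1) := by
    have hconst : ∏ _i ∈ range t, q ^ c = q ^ (c * t) := by
      rw [prod_const, card_range, zpow_mul, zpow_natCast]
    rw [← hconst, ← prod_mul_distrib, ← prod_mul_distrib]
    refine prod_congr rfl fun i _ => ?_
    rw [mul_sub, ← zpow_add₀ hq0, ← zpow_add₀ hq0, mul_one]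
    congr 2
    ring
  rw [hfactor, hfactor, ← qbinom_mul_prod hq, sub_mul, zpow_sub₀ hq0]
  simp only [add_sub_cancel_left]
  field_simp

variable {k V : Type*} [Field k] [AddCommGroup V] [Module k V]

/-- The dimension of a subspace as an integer, so that differences of dimensions make sense. -/
def dim (N : Submodule k V) : ℤ := finrank k N

/-- The families of `t` vectors of `G` that are linearly independent modulo `F`. -/
def frames (G F : Submodule k V) (t : ℕ) : Set (Fin t → V) :=
  {v | (∀ i, v i ∈ G) ∧ LinearIndependent k (F.mkQ ∘ v)}

theorem dim_bot : dim (⊥ : Submodule k V) = 0 := by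
  rw [dim, finrank_bot, Nat.cast_zero]

theorem card_eq_card_mul_of_card_fiber {α β M : Type*} [Finite α] [Finite β] [Semiring M]
    (f : α → β) {c : M} (hc : ∀ b, (Nat.card {a // f a = b} : M) = c) :
    (Nat.card α : M) = Nat.card β * c := by
  have := Fintype.ofFinite β
  rw [Nat.card_congr (Equiv.sigmaFiberEquiv f).symm, Nat.card_sigma, Nat.cast_sum,
    sum_congr rfl fun b _ => hc b, sum_const, card_univ, Nat.card_eq_fintype_card, nsmul_eq_mul]

theorem span_range_le {G : Submodule k V} {t : ℕ} {v : Fin t → V} (hv : ∀ i, v i ∈ G) :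
    Submodule.span k (Set.range v) ≤ G :=
  Submodule.span_le.2 (Set.range_subset_iff.2 hv)

theorem snoc_mem_frames_iff {G F : Submodule k V} {t : ℕ} {v : Fin t → V} {x : V} :
    (Fin.snoc v x : Fin (t + 1) → V) ∈ frames G F (t + 1) ↔
      v ∈ frames G F t ∧
        x ∈ (G : Set V) \ (F ⊔ Submodule.span k (Set.range v) : Submodule k V) := by
  rw [frames, frames, Set.mem_ofPred_eq, Set.mem_ofPred_eq, Fin.comp_snoc,
    linearIndependent_finSnoc, Set.range_comp, ← Submodule.map_span, ← Submodule.mem_comap,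
    Submodule.comap_map_mkQ, Fin.forall_fin_succ']
  simp only [Fin.snoc_castSucc, Fin.snoc_last, Set.mem_sdiff, SetLike.mem_coe]
  tauto

theorem linearIndependent_mkQ_comp_iff {F : Submodule k V} {t : ℕ} {v : Fin t → V} :
    LinearIndependent k (F.mkQ ∘ v) ↔
      LinearIndependent k v ∧ Disjoint (Submodule.span k (Set.range v)) F := by
  constructor
  · intro hv
    exact ⟨hv.of_comp, F.ker_mkQ ▸ Submodule.range_ker_disjoint hv⟩
  · rintro ⟨hv, hdisj⟩
    rwa [F.mkQ.linearIndependent_iff_of_disjoint (F.ker_mkQ.symm ▸ hdisj)]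

theorem linearIndependent_mkQ_comp_of_inf_le {F F' W : Submodule k V} {t : ℕ} {v : Fin t → V}
    (hW : Submodule.span k (Set.range v) ≤ W) (hF : W ⊓ F' ≤ F)
    (hv : LinearIndependent k (F.mkQ ∘ v)) : LinearIndependent k (F'.mkQ ∘ v) := by
  obtain ⟨hli, hdisj⟩ := linearIndependent_mkQ_comp_iff.1 hv
  refine linearIndependent_mkQ_comp_iff.2 ⟨hli, disjoint_iff_inf_le.2 ?_⟩
  exact (le_inf inf_le_left ((inf_le_inf_right _ hW).trans hF)).trans hdisj.le_bot

theorem linearIndependent_mkQ_comp_of_le {F F' : Submodule k V} (hF : F' ≤ F) {t : ℕ}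
    {v : Fin t → V} (hv : LinearIndependent k (F.mkQ ∘ v)) : LinearIndependent k (F'.mkQ ∘ v) :=
  linearIndependent_mkQ_comp_of_inf_le le_top (inf_le_right.trans hF) hv

theorem sup_span_inf_eq {F T₀ : Submodule k V} (h₀ : T₀ ≤ F) {t : ℕ} {v : Fin t → V}
    (hv : LinearIndependent k (F.mkQ ∘ v)) :
    (T₀ ⊔ Submodule.span k (Set.range v)) ⊓ F = T₀ := by
  rw [sup_inf_assoc_of_le _ h₀, (linearIndependent_mkQ_comp_iff.1 hv).2.eq_bot, sup_bot_eq]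

section FiniteDimensional

variable [FiniteDimensional k V]

theorem dim_sup_add_dim_inf (M N : Submodule k V) : dim (M ⊔ N) + dim (M ⊓ N) = dim M + dim N := by
  simp only [dim]
  exact_mod_cast Submodule.finrank_sup_add_finrank_inf_eq M N

theorem eq_of_le_of_dim_eq {M N : Submodule k V} (h : M ≤ N) (hd : dim M = dim N) : M = N :=
  Submodule.eq_of_le_of_finrank_eq h (Int.ofNat_inj.1 hd)

theorem dim_sup_span {F : Submodule k V} {t : ℕ} {v : Fin t → V}
    (hv : LinearIndependent k (F.mkQ ∘ v)) :
    dim (F ⊔ Submodule.span k (Set.range v)) = dim F + t := by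
  obtain ⟨hli, hdisj⟩ := linearIndependent_mkQ_comp_iff.1 hv
  have hspan : dim (Submodule.span k (Set.range v)) = t := by
    rw [dim, finrank_span_eq_card hli, Fintype.card_fin]
  have hdim := dim_sup_add_dim_inf F (Submodule.span k (Set.range v))
  rwa [hdisj.symm.eq_bot, hspan, dim_bot, add_zero] at hdim

end FiniteDimensional

section Finite

variable [Fintype k] [Finite V]

theorem natCard_eq_zpow_dim (F : Submodule k V) :
    (Nat.card F : ℚ) = (Fintype.card k : ℚ) ^ dim F := by
  rw [natCard_eq_pow_finrank (K := k), Nat.card_eq_fintype_card, dim, zpow_natCast, Nat.cast_pow]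

theorem card_frames {G F : Submodule k V} (hFG : F ≤ G) (t : ℕ) :
    (Nat.card (frames G F t) : ℚ) =
      ∏ i ∈ range t, ((Fintype.card k : ℚ) ^ dim G - (Fintype.card k : ℚ) ^ (dim F + i)) := by
  induction t with
  | zero =>
    have : frames G F 0 = Set.univ :=
      Set.eq_univ_of_forall fun v => ⟨fun i => i.elim0, linearIndependent_empty_type⟩
    simp [this]
  | succ t ih =>
    let e (v : frames G F (t + 1)) : frames G F t :=
      ⟨Fin.init v.1, (snoc_mem_frames_iff.1 ((Fin.snoc_init_self v.1).symm ▸ v.2)).1⟩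
    rw [prod_range_succ, ← ih]
    refine card_eq_card_mul_of_card_fiber e fun v => ?_
    have hle : F ⊔ Submodule.span k (Set.range v.1) ≤ G := sup_le hFG (span_range_le v.2.1)
    let equiv : {w // e w = v} ≃
        ((G : Set V) \ (F ⊔ Submodule.span k (Set.range v.1) : Submodule k V) : Set V) :=
      { toFun w := ⟨w.1.1 (Fin.last t), by
          obtain ⟨w, rfl⟩ := w
          exact (snoc_mem_frames_iff.1 ((Fin.snoc_init_self w.1).symm ▸ w.2)).2⟩
        invFun x := ⟨⟨Fin.snoc v.1 x.1, snoc_mem_frames_iff.2 ⟨v.2, x.2⟩⟩,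
          Subtype.ext (Fin.init_snoc (α := fun _ => V) _ _)⟩
        left_inv := by
          rintro ⟨w, rfl⟩
          exact Subtype.ext (Subtype.ext (Fin.snoc_init_self w.1))
        right_inv x := Subtype.ext (Fin.snoc_last (α := fun _ => V) _ _) }
    rw [Nat.card_congr equiv, Nat.card_coe_set_eq, Set.ncard_sdiff (SetLike.coe_subset_coe.2 hle),
      Nat.cast_sub (Set.ncard_le_ncard (SetLike.coe_subset_coe.2 hle)), ← Nat.card_coe_set_eq,
      ← Nat.card_coe_set_eq, SetLike.coe_sort_coe, SetLike.coe_sort_coe, natCard_eq_zpow_dim,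
      natCard_eq_zpow_dim, dim_sup_span v.2.2]

/-- The subspaces of `G` that meet `F` in `T₀` and have `t` dimensions more than `T₀`. -/
def extensions (G F T₀ : Submodule k V) (t : ℕ) : Set (Submodule k V) :=
  {T | T ≤ G ∧ T ⊓ F = T₀ ∧ dim T = dim T₀ + t}

theorem card_frames_eq_card_extensions_mul {G F T₀ : Submodule k V} (h₀ : T₀ ≤ F) (hFG : F ≤ G)
    (t : ℕ) : (Nat.card (frames G F t) : ℚ) = Nat.card (extensions G F T₀ t) * ∏ i ∈ range t,
      ((Fintype.card k : ℚ) ^ (dim T₀ + t) - (Fintype.card k : ℚ) ^ (dim T₀ + i)) := by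
  let extend (v : frames G F t) : extensions G F T₀ t :=
    ⟨T₀ ⊔ Submodule.span k (Set.range v.1), sup_le (h₀.trans hFG) (span_range_le v.2.1),
      sup_span_inf_eq h₀ v.2.2, dim_sup_span (linearIndependent_mkQ_comp_of_le h₀ v.2.2)⟩
  refine card_eq_card_mul_of_card_fiber extend fun T => ?_
  obtain ⟨hTG, hTF, hdim⟩ := T.2
  have hT₀ : T₀ ≤ T.1 := hTF.ge.trans inf_le_left
  have hfiber (v : frames G F t) : extend v = T ↔ v.1 ∈ frames T T₀ t := by
    rw [Subtype.ext_iff]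
    refine ⟨fun h => ⟨fun i => ?_, linearIndependent_mkQ_comp_of_le h₀ v.2.2⟩, fun h => ?_⟩
    · exact h ▸ Submodule.mem_sup_right (Submodule.subset_span (Set.mem_range_self i))
    · exact eq_of_le_of_dim_eq (sup_le hT₀ (span_range_le h.1)) ((dim_sup_span h.2).trans hdim.symm)
  have hsub : frames T T₀ t ⊆ frames G F t := fun v hv =>
    ⟨fun i => hTG (hv.1 i), linearIndependent_mkQ_comp_of_inf_le (span_range_le hv.1) hTF.le hv.2⟩
  rw [← hdim, ← card_frames hT₀]
  exact_mod_cast Nat.card_congr ((Equiv.subtypeEquivRight hfiber).trans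
    (Equiv.subtypeSubtypeEquivSubtype (hsub ·)))

theorem card_extensions {G F T₀ : Submodule k V} (h₀ : T₀ ≤ F) (hFG : F ≤ G) (t : ℕ) :
    (Nat.card (extensions G F T₀ t) : ℚ) =
      qbinom (Fintype.card k) (dim G - dim F) t *
        (Fintype.card k : ℚ) ^ ((dim F - dim T₀) * t) := by
  have hq : (1 : ℚ) < Fintype.card k := by exact_mod_cast Fintype.one_lt_card
  have hne : ∏ i ∈ range t,
      ((Fintype.card k : ℚ) ^ (dim T₀ + t) - (Fintype.card k : ℚ) ^ (dim T₀ + i)) ≠ 0 :=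
    prod_ne_zero_iff.2 fun i hi => (sub_pos.2 (zpow_lt_zpow_right₀ hq (by
      have := mem_range.1 hi
      omega))).ne'
  refine mul_right_cancel₀ hne ?_
  rw [← prod_zpow_sub_zpow hq, ← card_frames hFG, card_frames_eq_card_extensions_mul h₀ hFG]

end Finite

/-! ### Subspaces in prescribed position with respect to a filtration -/

/-- The dimension of the `u`-th graded piece of the filtration induced by `F` on `Q / P`. -/
def jump (P Q : Submodule k V) (F : ℕ → Submodule k V) (u : ℕ) : ℤ :=
  dim (Q ⊓ F u) - dim (P ⊓ F u) - dim (Q ⊓ F (u - 1)) + dim (P ⊓ F (u - 1))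

/-- The subspaces `T` between `P` and `Q` for which the filtration induced by `F` on `T / P` has
graded pieces of dimensions `t 1, …, t n`. -/
def withJumps (P Q : Submodule k V) (F : ℕ → Submodule k V) (n : ℕ) (t : ℕ → ℕ) :
    Set (Submodule k V) :=
  {T | P ≤ T ∧ T ≤ Q ∧ ∀ u ∈ Icc 1 n, jump P T F u = t u}

theorem sum_Icc_sub_pred (f : ℕ → ℤ) {m n : ℕ} (hmn : m ≤ n) :
    ∑ j ∈ Icc (m + 1) n, (f j - f (j - 1)) = f n - f m := by
  induction n, hmn using Nat.le_induction with
  | base => simp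
  | succ n hmn ih =>
    rw [sum_Icc_succ_top (by omega), ih, Nat.add_sub_cancel]
    ring

theorem prod_zpow_eq_zpow_sum {ι K : Type*} [CommGroupWithZero K] {q : K} (hq : q ≠ 0)
    (s : Finset ι) (f : ι → ℤ) : ∏ i ∈ s, q ^ f i = q ^ ∑ i ∈ s, f i := by
  induction s using Finset.cons_induction with
  | empty => simp
  | cons i s hi ih => rw [prod_cons, sum_cons, zpow_add₀ hq, ih]

theorem jump_zero_left {G : ℕ → Submodule k V} (hG : Monotone G) (T : Submodule k V) (u : ℕ) :
    jump (G 0) T G u = dim (T ⊓ G u) - dim (T ⊓ G (u - 1)) := by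
  rw [jump, inf_eq_left.2 (hG (Nat.zero_le u)), inf_eq_left.2 (hG (Nat.zero_le (u - 1)))]
  ring

theorem sum_jump {F : ℕ → Submodule k V} (P Q : Submodule k V) (n : ℕ) (hF₀ : F 0 ≤ P ⊓ Q) :
    ∑ u ∈ Icc 1 n, jump P Q F u = dim (Q ⊓ F n) - dim (P ⊓ F n) := by
  obtain ⟨hP, hQ⟩ := le_inf_iff.1 hF₀
  have := sum_Icc_sub_pred (fun u => dim (Q ⊓ F u) - dim (P ⊓ F u)) (Nat.zero_le n)
  simp only [inf_eq_right.2 hP, inf_eq_right.2 hQ, sub_self, sub_zero] at this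
  rw [← this]
  exact sum_congr rfl fun u _ => by rw [jump]; ring

theorem mem_withJumps_succ_iff {G : ℕ → Submodule k V} (hG : Monotone G) {n : ℕ} {t : ℕ → ℕ}
    {T : Submodule k V} : T ∈ withJumps (G 0) (G (n + 1)) G (n + 1) t ↔
      T ⊓ G n ∈ withJumps (G 0) (G n) G n t ∧ T ≤ G (n + 1) ∧
        dim T = dim (T ⊓ G n) + t (n + 1) := by
  have hjump {u : ℕ} (hu : u ≤ n) : jump (G 0) (T ⊓ G n) G u = jump (G 0) T G u := by
    rw [jump_zero_left hG, jump_zero_left hG, inf_assoc,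
      inf_assoc, inf_eq_right.2 (hG hu), inf_eq_right.2 (hG ((Nat.sub_le u 1).trans hu))]
  have htop (hT : T ≤ G (n + 1)) :
      jump (G 0) T G (n + 1) = dim T - dim (T ⊓ G n) := by
    rw [jump_zero_left hG, inf_eq_left.2 hT, Nat.add_sub_cancel]
  constructor
  · rintro ⟨h₀, hT, ht⟩
    refine ⟨⟨le_inf h₀ (hG (Nat.zero_le n)), inf_le_right, fun u hu => ?_⟩, hT, ?_⟩
    · obtain ⟨hu₁, hun⟩ := mem_Icc.1 hu
      exact (hjump hun).trans (ht u (mem_Icc.2 ⟨hu₁, by omega⟩))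
    · linarith [htop hT, ht (n + 1) (by simp)]
  · rintro ⟨⟨h₀, -, ht⟩, hT, hdim⟩
    replace h₀ := h₀.trans inf_le_left
    refine ⟨h₀, hT, fun u hu => ?_⟩
    obtain ⟨hu₁, hun⟩ := mem_Icc.1 hu
    obtain hun | rfl := Nat.le_succ_iff.1 hun
    · exact (hjump hun).symm.trans (ht u (mem_Icc.2 ⟨hu₁, hun⟩))
    · linarith [htop hT]

theorem jump_sup_inf [FiniteDimensional k V] {P T Q : Submodule k V} (hPT : P ≤ T) (hTQ : T ≤ Q)
    (F : ℕ → Submodule k V) (u : ℕ) : jump P T (fun u => P ⊔ Q ⊓ F u) u = jump P T F u := by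
  have hdim (u : ℕ) : dim (T ⊓ (P ⊔ Q ⊓ F u)) = dim P + dim (T ⊓ F u) - dim (P ⊓ F u) := by
    have hmod : T ⊓ (P ⊔ Q ⊓ F u) = P ⊔ T ⊓ F u := by
      rw [inf_comm, sup_inf_assoc_of_le _ hPT, inf_right_comm, inf_eq_right.2 hTQ]
    have := dim_sup_add_dim_inf P (T ⊓ F u)
    rw [← inf_assoc, inf_eq_left.2 hPT] at this
    rw [hmod]
    linarith
  simp only [jump, hdim, inf_eq_left.2 (le_sup_left : P ≤ P ⊔ Q ⊓ F _)]
  ring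

section Finite

variable [Fintype k] [Finite V]

theorem card_withJumps_chain {G : ℕ → Submodule k V} (hG : Monotone G) (t : ℕ → ℕ) (n : ℕ) :
    (Nat.card (withJumps (G 0) (G n) G n t) : ℚ) = ∏ u ∈ Icc 1 n,
      (qbinom (Fintype.card k) (dim (G u) - dim (G (u - 1))) (t u) *
        (Fintype.card k : ℚ) ^
          ((dim (G (u - 1)) - dim (G 0) - ∑ j ∈ Icc 1 (u - 1), t j) * t u)) := by
  induction n with
  | zero =>
    have : withJumps (G 0) (G 0) G 0 t = {G 0} := Set.ext fun T =>
      ⟨fun hT => le_antisymm hT.2.1 hT.1, by rintro rfl; exact ⟨le_rfl, le_rfl, by simp⟩⟩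
    simp [this]
  | succ n ih =>
    let e (T : withJumps (G 0) (G (n + 1)) G (n + 1) t) : withJumps (G 0) (G n) G n t :=
      ⟨T.1 ⊓ G n, ((mem_withJumps_succ_iff hG).1 T.2).1⟩
    rw [prod_Icc_succ_top (by omega), ← ih, Nat.add_sub_cancel]
    refine card_eq_card_mul_of_card_fiber e fun T₀ => ?_
    obtain ⟨h₀, hT₀, ht⟩ := T₀.2
    have hdim : dim T₀.1 = dim (G 0) + ∑ j ∈ Icc 1 n, t j := by
      have hsum := sum_jump (F := G) (G 0) T₀.1 n (le_inf le_rfl h₀)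
      rw [inf_eq_left.2 hT₀, inf_eq_left.2 (hG (Nat.zero_le n)),
        sum_congr rfl fun u hu => ht u hu] at hsum
      push_cast
      linarith
    have hfiber (T : withJumps (G 0) (G (n + 1)) G (n + 1) t) :
        e T = T₀ ↔ T.1 ∈ extensions (G (n + 1)) (G n) T₀ (t (n + 1)) := by
      have hT := ((mem_withJumps_succ_iff hG).1 T.2).2
      rw [Subtype.ext_iff]
      exact ⟨fun h => ⟨hT.1, h, h ▸ hT.2⟩, fun h => h.2.1⟩
    have hsub : extensions (G (n + 1)) (G n) T₀ (t (n + 1)) ⊆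
        withJumps (G 0) (G (n + 1)) G (n + 1) t :=
      fun T hT => (mem_withJumps_succ_iff hG).2 ⟨hT.2.1 ▸ T₀.2, hT.1, by rw [hT.2.1, hT.2.2]⟩
    rw [sub_sub, ← hdim, ← card_extensions hT₀ (hG (Nat.le_succ n))]
    exact_mod_cast Nat.card_congr ((Equiv.subtypeEquivRight hfiber).trans
      (Equiv.subtypeSubtypeEquivSubtype (hsub ·)))

theorem card_withJumps {P Q : Submodule k V} (hPQ : P ≤ Q) {F : ℕ → Submodule k V} (hF : Monotone F)
    {n : ℕ} (hF₀ : F 0 = ⊥) (hFn : F n = ⊤) (t : ℕ → ℕ) :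
    (Nat.card (withJumps P Q F n t) : ℚ) =
      (Fintype.card k : ℚ) ^ (∑ j ∈ Icc 1 n, ∑ u ∈ Icc 1 n,
        if j < u then (jump P Q F j - t j) * t u else 0) *
      ∏ u ∈ Icc 1 n, qbinom (Fintype.card k) (jump P Q F u) (t u) := by
  have hq : (Fintype.card k : ℚ) ≠ 0 := Nat.cast_ne_zero.2 Fintype.card_ne_zero
  let G (u : ℕ) : Submodule k V := P ⊔ Q ⊓ F u
  have hG : Monotone G := fun i j hij => sup_le_sup_left (inf_le_inf_left _ (hF hij)) _
  have hG₀ : G 0 = P := by simp [G, hF₀]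
  have hGn : G n = Q := by simp [G, hFn, hPQ]
  have hset : withJumps P Q F n t = withJumps (G 0) (G n) G n t := by
    rw [hG₀, hGn]
    exact Set.ext fun T => and_congr_right fun hPT => and_congr_right fun hTQ =>
      forall₂_congr fun u _ => by rw [jump_sup_inf hPT hTQ]
  have hjump (u : ℕ) : dim (G u) - dim (G (u - 1)) = jump P Q F u := by
    have hGQ (u : ℕ) : Q ⊓ G u = G u := inf_eq_right.2 (sup_le hPQ inf_le_left)
    rw [← jump_sup_inf hPQ le_rfl, ← hGQ, ← hGQ (u - 1), ← jump_zero_left hG, hG₀]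
  have hexp (u : ℕ) (hu : u ∈ Icc 1 n) :
      (dim (G (u - 1)) - dim (G 0) - (∑ j ∈ Icc 1 (u - 1), t j : ℕ)) * t u =
        ∑ j ∈ Icc 1 n, if j < u then (jump P Q F j - t j) * t u else 0 := by
    have hrange : {j ∈ Icc 1 n | j < u} = Icc 1 (u - 1) := by
      ext j
      simp only [mem_filter, mem_Icc] at hu ⊢
      omega
    rw [← sum_filter, hrange, ← sum_mul, sum_sub_distrib, sum_congr rfl fun j _ => (hjump j).symm,
      sum_Icc_sub_pred (fun j => dim (G j)) (Nat.zero_le _), Nat.cast_sum]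
  rw [hset, card_withJumps_chain hG, prod_mul_distrib, mul_comm, sum_comm,
    prod_zpow_eq_zpow_sum hq, sum_congr rfl hexp]
  simp only [hjump]

end Finite

/-! ### Relative positions of flags -/

/-- The matrix of relative positions of two filtrations: its `(i, j)` entry is the dimension of the
`j`-th graded piece of the filtration induced by `L'` on `L i / L (i - 1)`. -/
def relPos (L L' : ℕ → Submodule k V) (i j : ℕ) : ℤ := jump (L (i - 1)) (L i) L' j

/-- The pair `(L, L')` has relative position `A`, where only the entries `A i j` with
`1 ≤ i, j ≤ n` matter; for flags this says that `(L, L')` lies in the orbit `O_A`. -/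
def HasRelPos (n : ℕ) (L L' : ℕ → Submodule k V) (A : ℕ → ℕ → ℤ) : Prop :=
  ∀ i ∈ Icc 1 n, ∀ j ∈ Icc 1 n, relPos L L' i j = A i j

theorem relPos_comm (L L' : ℕ → Submodule k V) (i j : ℕ) : relPos L L' i j = relPos L' L j i := by
  simp only [relPos, jump, inf_comm (L _)]
  ring

theorem sum_sum_relPos (L L' : ℕ → Submodule k V) {a b c d : ℕ} (hab : a ≤ b) (hcd : c ≤ d) :
    ∑ i ∈ Icc (a + 1) b, ∑ j ∈ Icc (c + 1) d, relPos L L' i j =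
      dim (L b ⊓ L' d) - dim (L b ⊓ L' c) - (dim (L a ⊓ L' d) - dim (L a ⊓ L' c)) := by
  rw [← sum_Icc_sub_pred (fun i => dim (L i ⊓ L' d) - dim (L i ⊓ L' c)) hab]
  refine sum_congr rfl fun i _ => ?_
  have := sum_Icc_sub_pred (fun j => dim (L i ⊓ L' j) - dim (L (i - 1) ⊓ L' j)) hcd
  rw [sub_sub_sub_comm, ← this]
  exact sum_congr rfl fun j _ => by rw [relPos, jump]; ring

theorem relPos_eq_zero_of_le {L L' : ℕ → Submodule k V} (hL : Monotone L) (hL' : Monotone L')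
    {i j : ℕ} (h : L' j ≤ L (i - 1)) : relPos L L' i j = 0 := by
  have hj := hL' (Nat.sub_le j 1)
  have hi := hL (Nat.sub_le i 1)
  rw [relPos, jump, inf_eq_right.2 h, inf_eq_right.2 (hj.trans h), inf_eq_right.2 (h.trans hi),
    inf_eq_right.2 (hj.trans (h.trans hi))]
  ring

section Flag

variable {Φ : V →ₗ[k] V →ₗ[k] k} {n : ℕ} {L L' F : ℕ → Submodule k V}

theorem IsFlag.zero_eq_bot (hL : IsFlag Φ n L) : L 0 = ⊥ := hL.1

theorem IsFlag.monotone (hL : IsFlag Φ n L) : Monotone L := monotone_nat_of_le_succ hL.2.1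

theorem IsFlag.eq_top (hL : IsFlag Φ n L) {i : ℕ} (hi : n ≤ i) : L i = ⊤ := hL.2.2.1 i hi

theorem IsFlag.last_eq_top (hL : IsFlag Φ n L) : L n = ⊤ := hL.eq_top le_rfl

theorem IsFlag.sub_eq_perpB (hL : IsFlag Φ n L) {i : ℕ} (hi : i ≤ n) : L (n - i) = perpB Φ (L i) :=
  hL.2.2.2 i hi

theorem IsFlag.sum_jump (hF : IsFlag Φ n F) (P Q : Submodule k V) :
    ∑ u ∈ Icc 1 n, jump P Q F u = dim Q - dim P := by
  rw [FlagC.sum_jump P Q n (hF.zero_eq_bot.trans_le bot_le), hF.last_eq_top, inf_top_eq, inf_top_eq]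

theorem sum_relPos_right (hL' : IsFlag Φ n L') (i : ℕ) :
    ∑ j ∈ Icc 1 n, relPos L L' i j = dim (L i) - dim (L (i - 1)) :=
  hL'.sum_jump _ _

theorem sum_relPos_left (hL : IsFlag Φ n L) (j : ℕ) :
    ∑ i ∈ Icc 1 n, relPos L L' i j = dim (L' j) - dim (L' (j - 1)) := by
  simp only [relPos_comm L, sum_relPos_right hL]

theorem perpB_anti {M N : Submodule k V} (h : M ≤ N) : perpB Φ N ≤ perpB Φ M :=
  fun _ hv u hu => hv u (h hu)

theorem perpB_sup (M N : Submodule k V) : perpB Φ (M ⊔ N) = perpB Φ M ⊓ perpB Φ N := by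
  refine le_antisymm (le_inf (perpB_anti le_sup_left) (perpB_anti le_sup_right)) ?_
  rintro v ⟨hM, hN⟩ u hu
  obtain ⟨x, hx, y, hy, rfl⟩ := Submodule.mem_sup.1 hu
  rw [map_add, LinearMap.add_apply, hM x hx, hN y hy, add_zero]

section FiniteDimensional

variable [FiniteDimensional k V]

theorem relDim_eq_jump {P Q : Submodule k V} (hPQ : P ≤ Q) (hF : Monotone F) (u : ℕ) :
    (relDim (Q ⊓ F u) (P ⊓ F u ⊔ Q ⊓ F (u - 1)) : ℤ) = jump P Q F u := by
  have hF := hF (Nat.sub_le u 1)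
  have hle : P ⊓ F u ⊔ Q ⊓ F (u - 1) ≤ Q ⊓ F u :=
    sup_le (inf_le_inf_right _ hPQ) (inf_le_inf_left _ hF)
  have hquot := Submodule.finrank_quotient_add_finrank
    ((P ⊓ F u ⊔ Q ⊓ F (u - 1)).comap (Q ⊓ F u).subtype)
  rw [(Submodule.comapSubtypeEquivOfLe hle).finrank_eq] at hquot
  have hinf : P ⊓ F u ⊓ (Q ⊓ F (u - 1)) = P ⊓ F (u - 1) := by
    rw [inf_inf_inf_comm, inf_eq_left.2 hPQ, inf_eq_right.2 hF]
  have hsup := dim_sup_add_dim_inf (P ⊓ F u) (Q ⊓ F (u - 1))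
  rw [hinf] at hsup
  rw [relDim, jump]
  simp only [dim] at hsup ⊢
  omega

theorem jump_nonneg {P Q : Submodule k V} (hPQ : P ≤ Q) (hF : Monotone F) (u : ℕ) :
    0 ≤ jump P Q F u := by
  rw [← relDim_eq_jump hPQ hF]
  exact Int.natCast_nonneg _

theorem eMat_apply (A : ℕ → ℕ → ℤ) (L L' : Flags Φ n) :
    eMat Φ n A (L, L') = if HasRelPos n L.1 L'.1 A then 1 else 0 := by
  simp only [eMat, relDim_eq_jump (L.2.monotone (Nat.sub_le _ 1)) L'.2.monotone]
  exact if_congr Iff.rfl rfl rfl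

theorem le_of_relPos_eq_zero (hL : IsFlag Φ n L) (hL' : IsFlag Φ n L') {i : ℕ}
    (h : ∀ a ∈ Icc 1 i, ∀ b ∈ Icc (i + 1) n, relPos L L' a b = 0) : L i ≤ L' i := by
  obtain hi | hi := lt_or_ge n i
  · exact le_top.trans_eq (hL'.eq_top hi.le).symm
  have hblock := sum_sum_relPos L L' (Nat.zero_le i) hi
  rw [sum_eq_zero fun a ha => sum_eq_zero (h a ha), hL.zero_eq_bot, hL'.last_eq_top, inf_top_eq,
    bot_inf_eq, bot_inf_eq, sub_self, sub_zero] at hblock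
  exact inf_eq_left.1 (eq_of_le_of_dim_eq inf_le_left (sub_eq_zero.1 hblock.symm).symm)

theorem dim_perpB (hΦ : LinearMap.BilinForm.Nondegenerate Φ) (N : Submodule k V) :
    dim (perpB Φ N) = finrank k V - dim N := by
  have horth : perpB Φ N = LinearMap.BilinForm.orthogonal Φ N := rfl
  rw [horth, dim, LinearMap.BilinForm.finrank_orthogonal hΦ, Nat.cast_sub N.finrank_le, dim]

theorem perpB_perpB (hΦ : LinearMap.BilinForm.Nondegenerate Φ)
    (hrefl : LinearMap.BilinForm.IsRefl Φ) (N : Submodule k V) : perpB Φ (perpB Φ N) = N :=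
  LinearMap.BilinForm.orthogonal_orthogonal hΦ hrefl N

theorem dim_inf_sub (hΦ : LinearMap.BilinForm.Nondegenerate Φ) (hL : IsFlag Φ n L)
    (hL' : IsFlag Φ n L') {i j : ℕ} (hi : i ≤ n) (hj : j ≤ n) :
    dim (L (n - i) ⊓ L' (n - j)) = finrank k V - dim (L i) - dim (L' j) + dim (L i ⊓ L' j) := by
  rw [hL.sub_eq_perpB hi, hL'.sub_eq_perpB hj, ← perpB_sup, dim_perpB hΦ]
  linarith [dim_sup_add_dim_inf (L i) (L' j)]

theorem relPos_sub_sub (hΦ : LinearMap.BilinForm.Nondegenerate Φ) (hL : IsFlag Φ n L)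
    (hL' : IsFlag Φ n L') {i j : ℕ} (hi : i ∈ Icc 1 n) (hj : j ∈ Icc 1 n) :
    relPos L L' (n + 1 - i) (n + 1 - j) = relPos L L' i j := by
  rw [mem_Icc] at hi hj
  have hi_eq : n + 1 - i = n - (i - 1) ∧ n - (i - 1) - 1 = n - i := by omega
  have hj_eq : n + 1 - j = n - (j - 1) ∧ n - (j - 1) - 1 = n - j := by omega
  simp only [relPos, jump, hi_eq, hj_eq]
  rw [dim_inf_sub hΦ hL hL', dim_inf_sub hΦ hL hL', dim_inf_sub hΦ hL hL', dim_inf_sub hΦ hL hL']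
  · ring
  all_goals omega

end FiniteDimensional

/-! ### Enlarging one step of a flag -/

/-- `L'` differs from `L` only in the `h`-th step, which is enlarged inside `L (h + 1)`, and in the
`(n - h)`-th step, which is the orthogonal complement of the `h`-th one when `L'` is a flag. -/
structure ExpandsAt (n h : ℕ) (L L' : ℕ → Submodule k V) : Prop where
  eq_of_ne : ∀ i, i ≠ h → i ≠ n - h → L' i = L i
  le_step : L h ≤ L' h
  step_le : L' h ≤ L (h + 1)

/-- The sequence `L` with its `h`-th step replaced by `T` and its `(n - h)`-th step by the
orthogonal complement of `T`. -/
def replaceStep (Φ : V →ₗ[k] V →ₗ[k] k) (n h : ℕ) (L : ℕ → Submodule k V) (T : Submodule k V) :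
    ℕ → Submodule k V :=
  fun i => if i = h then T else if i = n - h then perpB Φ T else L i

/-- The matrix `A - ∑ u, t u • (E^θ_{h,u} - E^θ_{h+1,u})`. -/
def shift (n h : ℕ) (t : ℕ → ℤ) (A : ℕ → ℕ → ℤ) : ℕ → ℕ → ℤ := fun a b =>
  A a b - ∑ u ∈ Icc 1 n, t u * (Eth n h u a b - Eth n (h + 1) u a b)

variable {h : ℕ}

theorem sum_mul_Eth (t : ℕ → ℤ) {i a b : ℕ} (hi : i ≤ n) (ha : a ∈ Icc 1 n) (hb : b ∈ Icc 1 n) :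
    ∑ u ∈ Icc 1 n, t u * Eth n i u a b =
      (if a = i then t b else 0) + if n + 1 - a = i then t (n + 1 - b) else 0 := by
  have hb' : n + 1 - b ∈ Icc 1 n := by
    rw [mem_Icc] at hb ⊢
    omega
  have hmirror (u : ℕ) (hu : u ∈ Icc 1 n) :
      (a = n + 1 - i ∧ b = n + 1 - u) ↔ (n + 1 - a = i ∧ n + 1 - b = u) := by
    rw [mem_Icc] at ha hb hu
    omega
  have hexpand (u : ℕ) (hu : u ∈ Icc 1 n) : t u * Eth n i u a b =
      (if b = u then (if a = i then t u else 0) else 0) +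
        if n + 1 - b = u then (if n + 1 - a = i then t u else 0) else 0 := by
    rw [Eth, mul_add, mul_ite, mul_ite, if_congr (hmirror u hu) rfl rfl]
    simp only [mul_one, mul_zero, ← ite_and, and_comm]
  rw [sum_congr rfl hexpand, sum_add_distrib, sum_ite_eq, sum_ite_eq, if_pos hb, if_pos hb']

theorem shift_apply (t : ℕ → ℤ) (A : ℕ → ℕ → ℤ) (hn : 2 * h + 1 < n) {i j : ℕ}
    (hi : i ∈ Icc 1 n) (hj : j ∈ Icc 1 n) :
    shift n h t A i j = A i j - ((if i = h then t j else 0) - if i = h + 1 then t j else 0) -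
      ((if n + 1 - i = h then t (n + 1 - j) else 0) -
        if n + 1 - i = h + 1 then t (n + 1 - j) else 0) := by
  simp only [shift, mul_sub, sum_sub_distrib]
  rw [sum_mul_Eth t (by omega) hi hj, sum_mul_Eth t (by omega) hi hj]
  ring

theorem shift_apply_self (t : ℕ → ℤ) (A : ℕ → ℕ → ℤ) (hh : 1 ≤ h) (hn : 2 * h + 1 < n) {j : ℕ}
    (hj : j ∈ Icc 1 n) : shift n h t A h j = A h j - t j := by
  rw [shift_apply t A hn (mem_Icc.2 ⟨hh, by omega⟩) hj, if_pos rfl, if_neg (by omega),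
    if_neg (by omega), if_neg (by omega)]
  ring

theorem shift_apply_succ (t : ℕ → ℤ) (A : ℕ → ℕ → ℤ) (hn : 2 * h + 1 < n) {j : ℕ}
    (hj : j ∈ Icc 1 n) : shift n h t A (h + 1) j = A (h + 1) j + t j := by
  rw [shift_apply t A hn (mem_Icc.2 ⟨by omega, by omega⟩) hj, if_pos rfl, if_neg (by omega),
    if_neg (by omega), if_neg (by omega)]
  ring

theorem ExpandsAt.relPos_eq (hL' : ExpandsAt n h L L') (F : ℕ → Submodule k V) {i : ℕ} (hi : 1 ≤ i)
    (hin : i < n - h) (j : ℕ) :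
    relPos L F i j = relPos L' F i j - ((if i = h then jump (L h) (L' h) F j else 0) -
      if i = h + 1 then jump (L h) (L' h) F j else 0) := by
  by_cases hih : i = h
  · subst hih
    have hpred := hL'.eq_of_ne (i - 1) (by omega) (by omega)
    rw [if_pos rfl, if_neg (by omega), relPos, relPos, hpred]
    simp only [jump]
    ring
  · have hself := hL'.eq_of_ne i hih (by omega)
    rw [if_neg hih, relPos, relPos, hself]
    by_cases hih' : i = h + 1
    · subst hih'
      rw [if_pos rfl, Nat.add_sub_cancel]
      simp only [jump]
      ring
    · rw [if_neg hih', hL'.eq_of_ne (i - 1) (by omega) (by omega)]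
      ring

theorem hasRelPos_of_offDiag {C : ℕ → ℕ → ℤ} (hL : IsFlag Φ n L)
    (hoff : ∀ i ∈ Icc 1 n, ∀ j ∈ Icc 1 n, i ≠ j → relPos L L' i j = C i j)
    (hcol : ∀ j ∈ Icc 1 n, dim (L' j) - dim (L' (j - 1)) = coM n C j) : HasRelPos n L L' C := by
  intro i hi j hj
  obtain rfl | hij := eq_or_ne i j
  · have hsum := (sum_relPos_left hL i).trans (hcol i hi)
    rw [coM, ← add_sum_erase _ _ hi, ← add_sum_erase _ _ hi,
      sum_congr rfl fun a ha => hoff a (mem_of_mem_erase ha) i hi (ne_of_mem_erase ha)] at hsum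
    exact add_right_cancel hsum
  · exact hoff i hi j hj hij

theorem Eth_sub_sub {a b i j : ℕ} (ha : a ≤ n) (hb : b ≤ n) (hi : i ∈ Icc 1 n) (hj : j ∈ Icc 1 n) :
    Eth n a b (n + 1 - i) (n + 1 - j) = Eth n a b i j := by
  rw [mem_Icc] at hi hj
  have hleft : (n + 1 - i = a ∧ n + 1 - j = b) ↔ (i = n + 1 - a ∧ j = n + 1 - b) := by omega
  have hright : (n + 1 - i = n + 1 - a ∧ n + 1 - j = n + 1 - b) ↔ (i = a ∧ j = b) := by omega
  rw [Eth, Eth, if_congr hleft rfl rfl, if_congr hright rfl rfl, add_comm]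

theorem ExpandsAt.relPos_succ_self (hL : Monotone L) (hE : ExpandsAt n h L L') (hh : 1 ≤ h)
    (hn : 2 * h + 1 < n) : relPos L L' (h + 1) h = dim (L' h) - dim (L h) := by
  have hpred : L' (h - 1) = L (h - 1) := hE.eq_of_ne _ (by omega) (by omega)
  have hpred_le : L (h - 1) ≤ L h := hL (Nat.sub_le h 1)
  rw [relPos, jump, Nat.add_sub_cancel, hpred, inf_eq_right.2 hE.step_le, inf_eq_left.2 hE.le_step,
    inf_eq_right.2 hpred_le, inf_eq_right.2 (hpred_le.trans (hL (Nat.le_succ h)))]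
  ring

theorem ExpandsAt.le_of_ne (hL : IsFlag Φ n L) (hL' : IsFlag Φ n L') (hE : ExpandsAt n h L L')
    (hn : 2 * h + 1 < n) {i : ℕ} (hi : i ≠ h) : L' i ≤ L i := by
  obtain rfl | hi' := eq_or_ne i (n - h)
  · rw [hL.sub_eq_perpB (by omega), hL'.sub_eq_perpB (by omega)]
    exact perpB_anti hE.le_step
  · exact (hE.eq_of_ne i hi hi').le

theorem ExpandsAt.relPos_of_lt (hL : IsFlag Φ n L) (hL' : IsFlag Φ n L') (hE : ExpandsAt n h L L')
    (hh : 1 ≤ h) (hn : 2 * h + 1 < n) {i j : ℕ} (hij : j < i) :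
    relPos L L' i j = (dim (L' h) - dim (L h)) * Eth n (h + 1) h i j := by
  have hcorner : ¬(i = n + 1 - (h + 1) ∧ j = n + 1 - h) := by omega
  rw [Eth, if_neg hcorner]
  by_cases hmid : i = h + 1 ∧ j = h
  · rw [if_pos hmid, hmid.1, hmid.2, hE.relPos_succ_self hL.monotone hh hn]
    ring
  · have hle : L' j ≤ L (i - 1) := by
      obtain rfl | hj := eq_or_ne j h
      · exact hE.step_le.trans (hL.monotone (by omega))
      · exact (hE.le_of_ne hL hL' hn hj).trans (hL.monotone (by omega))
    rw [if_neg hmid, relPos_eq_zero_of_le hL.monotone hL'.monotone hle]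
    ring

theorem ExpandsAt.jump_eq (hE : ExpandsAt n h L L') (hh : 1 ≤ h) (hn : 2 * h + 1 < n)
    {A : ℕ → ℕ → ℤ} {t : ℕ → ℤ} (hA' : HasRelPos n L' F A)
    (hA : HasRelPos n L F (shift n h t A)) {u : ℕ} (hu : u ∈ Icc 1 n) :
    jump (L h) (L' h) F u = t u := by
  have hhmem : h ∈ Icc 1 n := mem_Icc.2 ⟨hh, by omega⟩
  have hrow := hE.relPos_eq F hh (by omega) u
  rw [hA h hhmem u hu, hA' h hhmem u hu, shift_apply_self t A hh hn hu, if_pos rfl,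
    if_neg (by omega), sub_zero] at hrow
  exact (sub_right_injective hrow).symm

theorem ExpandsAt.eq_replaceStep (hL' : IsFlag Φ n L') (hE : ExpandsAt n h L L')
    (hn : 2 * h + 1 < n) : L' = replaceStep Φ n h L (L' h) := by
  funext i
  rw [replaceStep]
  split_ifs with hi hi'
  · rw [hi]
  · rw [hi', hL'.sub_eq_perpB (by omega)]
  · exact hE.eq_of_ne i hi hi'

theorem expandsAt_replaceStep {T : Submodule k V} (hle : L h ≤ T) (hge : T ≤ L (h + 1)) :
    ExpandsAt n h L (replaceStep Φ n h L T) := by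
  have hstep : replaceStep Φ n h L T h = T := if_pos rfl
  refine ⟨fun i hi hi' => ?_, hle.trans_eq hstep.symm, hstep.trans_le hge⟩
  rw [replaceStep, if_neg hi, if_neg hi']

section FiniteDimensional

variable [FiniteDimensional k V]

theorem ExpandsAt.relPos_of_ne (hΦ : LinearMap.BilinForm.Nondegenerate Φ) (hL : IsFlag Φ n L)
    (hL' : IsFlag Φ n L') (hE : ExpandsAt n h L L') (hh : 1 ≤ h) (hn : 2 * h + 1 < n) {i j : ℕ}
    (hi : i ∈ Icc 1 n) (hj : j ∈ Icc 1 n) (hij : i ≠ j) :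
    relPos L L' i j = (dim (L' h) - dim (L h)) * Eth n (h + 1) h i j := by
  obtain hij | hij := hij.lt_or_gt
  · rw [← relPos_sub_sub hΦ hL hL' hi hj, ← Eth_sub_sub (by omega) (by omega) hi hj]
    exact hE.relPos_of_lt hL hL' hh hn (by rw [mem_Icc] at hj; omega)
  · exact hE.relPos_of_lt hL hL' hh hn hij

theorem expandsAt_of_relPos_offDiag (hL : IsFlag Φ n L) (hL' : IsFlag Φ n L')
    (hn : 2 * h + 1 < n) {c : ℤ}
    (hoff : ∀ i ∈ Icc 1 n, ∀ j ∈ Icc 1 n, i ≠ j → relPos L L' i j = c * Eth n (h + 1) h i j) :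
    ExpandsAt n h L L' := by
  have hzero {i j : ℕ} (hi : i ∈ Icc 1 n) (hj : j ∈ Icc 1 n) (hij : i ≠ j)
      (hlow : ¬(i = h + 1 ∧ j = h)) (hup : ¬(i = n + 1 - (h + 1) ∧ j = n + 1 - h)) :
      relPos L L' i j = 0 := by
    rw [hoff i hi j hj hij, Eth, if_neg hlow, if_neg hup, add_zero, mul_zero]
  have hle {i : ℕ} (hi : i ≠ n - h) : L i ≤ L' i := by
    refine le_of_relPos_eq_zero hL hL' fun a ha b hb => ?_
    rw [mem_Icc] at ha hb
    exact hzero (mem_Icc.2 (by omega)) (mem_Icc.2 (by omega)) (by omega) (by omega) (by omega)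
  have hge {i : ℕ} (hi : i ≠ h) : L' i ≤ L i := by
    refine le_of_relPos_eq_zero hL' hL fun a ha b hb => ?_
    rw [mem_Icc] at ha hb
    rw [relPos_comm]
    exact hzero (mem_Icc.2 (by omega)) (mem_Icc.2 (by omega)) (by omega) (by omega) (by omega)
  have heq (i : ℕ) (hi : i ≠ h) (hi' : i ≠ n - h) : L' i = L i := le_antisymm (hge hi) (hle hi')
  exact ⟨heq, hle (by omega), (hL'.monotone (Nat.le_succ h)).trans_eq
    (heq (h + 1) (by omega) (by omega))⟩

theorem relPos_offDiag_iff (hΦ : LinearMap.BilinForm.Nondegenerate Φ) (hL : IsFlag Φ n L)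
    (hL' : IsFlag Φ n L') (hh : 1 ≤ h) (hn : 2 * h + 1 < n) (c : ℤ) :
    (∀ i ∈ Icc 1 n, ∀ j ∈ Icc 1 n, i ≠ j → relPos L L' i j = c * Eth n (h + 1) h i j) ↔
      ExpandsAt n h L L' ∧ dim (L' h) - dim (L h) = c := by
  constructor
  · intro hoff
    have hE := expandsAt_of_relPos_offDiag hL hL' hn hoff
    have hcorner := hoff (h + 1) (mem_Icc.2 ⟨by omega, by omega⟩) h (mem_Icc.2 ⟨hh, by omega⟩)
      (by omega)
    rw [hE.relPos_succ_self hL.monotone hh hn, Eth, if_pos ⟨rfl, rfl⟩, if_neg (by omega), add_zero,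
      mul_one] at hcorner
    exact ⟨hE, hcorner⟩
  · rintro ⟨hE, rfl⟩ i hi j hj hij
    exact hE.relPos_of_ne hΦ hL hL' hh hn hi hj hij

theorem ExpandsAt.hasRelPos_shift (hΦ : LinearMap.BilinForm.Nondegenerate Φ) (hL : IsFlag Φ n L)
    (hL' : IsFlag Φ n L') (hF : IsFlag Φ n F) (hE : ExpandsAt n h L L') (hn : 2 * h + 1 < n) :
    HasRelPos n L F (shift n h (jump (L h) (L' h) F) (relPos L' F)) := by
  intro i hi j hj
  rw [shift_apply _ _ hn hi hj]
  have hi' := mem_Icc.1 hi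
  by_cases hih : i < n - h
  · rw [if_neg (show n + 1 - i ≠ h by omega), if_neg (show n + 1 - i ≠ h + 1 by omega),
      hE.relPos_eq F hi'.1 hih]
    ring
  · rw [if_neg (show i ≠ h by omega), if_neg (show i ≠ h + 1 by omega),
      ← relPos_sub_sub hΦ hL hF hi hj, ← relPos_sub_sub hΦ hL' hF hi hj,
      hE.relPos_eq F (show 1 ≤ n + 1 - i by omega) (by omega)]
    ring

theorem ExpandsAt.hasRelPos_shift_iff (hΦ : LinearMap.BilinForm.Nondegenerate Φ)
    (hL : IsFlag Φ n L) (hL' : IsFlag Φ n L') (hF : IsFlag Φ n F) (hE : ExpandsAt n h L L')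
    (hn : 2 * h + 1 < n) {A : ℕ → ℕ → ℤ} {t : ℕ → ℤ}
    (ht : ∀ u ∈ Icc 1 n, jump (L h) (L' h) F u = t u) :
    HasRelPos n L F (shift n h t A) ↔ HasRelPos n L' F A := by
  refine forall₄_congr fun i hi j hj => ?_
  rw [hE.hasRelPos_shift hΦ hL hL' hF hn i hi j hj, shift, shift,
    sum_congr rfl fun u hu => by rw [ht u hu], sub_left_inj]

theorem isFlag_replaceStep (hΦ : LinearMap.BilinForm.Nondegenerate Φ)
    (hrefl : LinearMap.BilinForm.IsRefl Φ) (hL : IsFlag Φ n L) (hh : 1 ≤ h) (hn : 2 * h + 1 < n)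
    {T : Submodule k V} (hle : L h ≤ T) (hge : T ≤ L (h + 1)) :
    IsFlag Φ n (replaceStep Φ n h L T) := by
  have hperp_le : perpB Φ T ≤ L (n - h) :=
    (perpB_anti hle).trans_eq (hL.sub_eq_perpB (by omega)).symm
  have hle_perp : L (n - (h + 1)) ≤ perpB Φ T :=
    (hL.sub_eq_perpB (by omega)).trans_le (perpB_anti hge)
  have hother {i : ℕ} (hi : i ≠ h) (hi' : i ≠ n - h) : replaceStep Φ n h L T i = L i := by
    rw [replaceStep, if_neg hi, if_neg hi']
  have hstep : replaceStep Φ n h L T h = T := if_pos rfl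
  have hperp : replaceStep Φ n h L T (n - h) = perpB Φ T := by
    rw [replaceStep, if_neg (by omega), if_pos rfl]
  refine ⟨?_, fun i => ?_, fun i hi => ?_, fun i hi => ?_⟩
  · rw [hother (by omega) (by omega), hL.zero_eq_bot]
  · obtain rfl | hi := eq_or_ne i h
    · rw [hstep, hother (by omega) (by omega)]
      exact hge
    obtain hi_succ | hi_succ := eq_or_ne (i + 1) h
    · rw [hother hi (by omega), hi_succ, hstep]
      exact (hL.monotone (by omega)).trans hle
    obtain rfl | hi' := eq_or_ne i (n - h)
    · rw [hperp, hother hi_succ (by omega)]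
      exact hperp_le.trans (hL.monotone (Nat.le_succ _))
    obtain hi_succ' | hi_succ' := eq_or_ne (i + 1) (n - h)
    · rw [hother hi hi', hi_succ', hperp]
      exact (hL.monotone (by omega)).trans hle_perp
    · rw [hother hi hi', hother hi_succ hi_succ']
      exact hL.monotone (Nat.le_succ i)
  · rw [hother (by omega) (by omega), hL.eq_top hi]
  · obtain rfl | hih := eq_or_ne i h
    · rw [hstep, hperp]
    obtain rfl | hih' := eq_or_ne i (n - h)
    · rw [hperp, perpB_perpB hΦ hrefl, Nat.sub_sub_self (by omega), hstep]
    · rw [hother hih hih', hother (by omega) (by omega), hL.sub_eq_perpB hi]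

end FiniteDimensional

/-! ### Middle flags -/

/-- The flags `L'` that contribute to the value of `e_C ∗ e_A` at `(L, F)`. -/
def middleFlags (C A : ℕ → ℕ → ℤ) (L F : Flags Φ n) : Set (Flags Φ n) :=
  {L' | HasRelPos n L.1 L'.1 C ∧ HasRelPos n L'.1 F.1 A}

/-- The vectors `(t 1, …, t n)` of natural numbers with sum `R` and `t u ≤ a u`, extended by zero
to functions on `ℕ`. -/
def boundedCompositions (n R : ℕ) (a : ℕ → ℤ) : Set (ℕ → ℕ) :=
  {t | (∀ u, t u ≠ 0 → u ∈ Icc 1 n) ∧ ∑ u ∈ Icc 1 n, t u = R ∧ ∀ u ∈ Icc 1 n, (t u : ℤ) ≤ a u}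

theorem finsum_mem_one {α M : Type*} [AddCommMonoidWithOne M] [NeZero (1 : M)] (s : Set α) :
    ∑ᶠ x ∈ s, (1 : M) = Nat.card s := by
  rw [Nat.card_coe_set_eq]
  obtain hs | hs := s.finite_or_infinite
  · rw [finsum_mem_eq_finite_toFinset_sum _ hs, sum_const, nsmul_one,
      ← Set.ncard_eq_toFinset_card _ hs]
  · rw [hs.ncard, Nat.cast_zero, finsum_mem_eq_zero_of_infinite]
    rwa [Function.support_const one_ne_zero, Set.inter_univ]

theorem boundedCompositions_ext {R : ℕ} {a : ℕ → ℤ} {t t' : ℕ → ℕ}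
    (ht : t ∈ boundedCompositions n R a) (ht' : t' ∈ boundedCompositions n R a)
    (heq : ∀ u ∈ Icc 1 n, t u = t' u) : t = t' := by
  funext u
  by_cases hu : u ∈ Icc 1 n
  · exact heq u hu
  · rw [of_not_not fun h => hu (ht.1 u h), of_not_not fun h => hu (ht'.1 u h)]

theorem eq_of_hasRelPos_shift {R : ℕ} {A : ℕ → ℕ → ℤ} (hh : 1 ≤ h) (hn : 2 * h + 1 < n)
    {t t' : ℕ → ℕ} (ht : t ∈ boundedCompositions n R (A h))
    (ht' : t' ∈ boundedCompositions n R (A h)) (hA : HasRelPos n L F (shift n h (fun u => t u) A))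
    (hA' : HasRelPos n L F (shift n h (fun u => t' u) A)) : t = t' := by
  have hhmem : h ∈ Icc 1 n := mem_Icc.2 ⟨hh, by omega⟩
  refine boundedCompositions_ext ht ht' fun u hu => ?_
  have hrow := (hA h hhmem u hu).symm.trans (hA' h hhmem u hu)
  rw [shift_apply_self _ A hh hn hu, shift_apply_self _ A hh hn hu, sub_right_inj] at hrow
  exact_mod_cast hrow

section FiniteDimensional

variable [FiniteDimensional k V]

theorem conv_eMat_eMat (C A : ℕ → ℕ → ℤ) (L F : Flags Φ n) :
    conv Φ n (eMat Φ n C) (eMat Φ n A) (L, F) = Nat.card (middleFlags C A L F) := by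
  rw [← finsum_mem_one, conv]
  refine finsum_congr fun L' => ?_
  rw [eMat_apply, eMat_apply, finsum_eq_if, boole_mul, ← ite_and]
  exact if_congr Iff.rfl rfl rfl

variable {A C : ℕ → ℕ → ℤ} {R : ℕ}

theorem mem_middleFlags_iff (hΦ : LinearMap.BilinForm.Nondegenerate Φ) (hh : 1 ≤ h)
    (hn : 2 * h + 1 < n) (hroco : ∀ i ∈ Icc 1 n, roM n A i = coM n C i)
    (hC : ∀ i ∈ Icc 1 n, ∀ j ∈ Icc 1 n, i ≠ j → C i j = R * Eth n (h + 1) h i j)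
    {L L' F : Flags Φ n} :
    L' ∈ middleFlags C A L F ↔
      (ExpandsAt n h L.1 L'.1 ∧ dim (L'.1 h) - dim (L.1 h) = R) ∧ HasRelPos n L'.1 F.1 A := by
  rw [← relPos_offDiag_iff hΦ L.2 L'.2 hh hn]
  refine and_congr_left fun hA => ⟨fun hLC i hi j hj hij => ?_, fun hoff => ?_⟩
  · rw [hLC i hi j hj, hC i hi j hj hij]
  · refine hasRelPos_of_offDiag L.2 (fun i hi j hj hij => ?_) fun j hj => ?_
    · rw [hoff i hi j hj hij, hC i hi j hj hij]
    · rw [← hroco j hj, roM, ← sum_relPos_right F.2, sum_congr rfl fun u hu => hA j hj u hu]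

theorem exists_hasRelPos_shift (hΦ : LinearMap.BilinForm.Nondegenerate Φ) (hh : 1 ≤ h)
    (hn : 2 * h + 1 < n) {L L' F : Flags Φ n} (hE : ExpandsAt n h L.1 L'.1)
    (hdim : dim (L'.1 h) - dim (L.1 h) = R) (hA : HasRelPos n L'.1 F.1 A) :
    ∃ t ∈ boundedCompositions n R (A h), HasRelPos n L.1 F.1 (shift n h (fun u => t u) A) := by
  let t (u : ℕ) : ℕ := if u ∈ Icc 1 n then (jump (L.1 h) (L'.1 h) F.1 u).toNat else 0
  have ht (u : ℕ) (hu : u ∈ Icc 1 n) : jump (L.1 h) (L'.1 h) F.1 u = t u := by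
    simp only [t, if_pos hu, Int.toNat_of_nonneg (jump_nonneg hE.le_step F.2.monotone u)]
  refine ⟨t, ⟨fun u hu => of_not_not fun h => hu (if_neg h), ?_, fun u hu => ?_⟩,
    (hE.hasRelPos_shift_iff hΦ L.2 L'.2 F.2 hn ht).2 hA⟩
  · have hsum := F.2.sum_jump (L.1 h) (L'.1 h)
    rw [hdim, sum_congr rfl ht] at hsum
    exact_mod_cast hsum
  · have hrow := hE.relPos_eq F.1 hh (by omega) u
    rw [if_pos rfl, if_neg (by omega), sub_zero, ht u hu,
      hA h (mem_Icc.2 ⟨hh, by omega⟩) u hu] at hrow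
    have hnonneg : 0 ≤ relPos L.1 F.1 h u :=
      jump_nonneg (L.2.monotone (Nat.sub_le h 1)) F.2.monotone u
    linarith

theorem mem_middleFlags_iff_mem_withJumps (hΦ : LinearMap.BilinForm.Nondegenerate Φ) (hh : 1 ≤ h)
    (hn : 2 * h + 1 < n) (hroco : ∀ i ∈ Icc 1 n, roM n A i = coM n C i)
    (hC : ∀ i ∈ Icc 1 n, ∀ j ∈ Icc 1 n, i ≠ j → C i j = R * Eth n (h + 1) h i j)
    {L L' F : Flags Φ n} {t : ℕ → ℕ} (ht : ∑ u ∈ Icc 1 n, t u = R)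
    (hA : HasRelPos n L.1 F.1 (shift n h (fun u => t u) A)) :
    L' ∈ middleFlags C A L F ↔
      ExpandsAt n h L.1 L'.1 ∧ L'.1 h ∈ withJumps (L.1 h) (L.1 (h + 1)) F.1 n t := by
  rw [mem_middleFlags_iff hΦ hh hn hroco hC]
  constructor
  · rintro ⟨⟨hE, -⟩, hA'⟩
    exact ⟨hE, hE.le_step, hE.step_le, fun u hu => hE.jump_eq hh hn hA' hA hu⟩
  · rintro ⟨hE, -, -, hjump⟩
    refine ⟨⟨hE, ?_⟩, (hE.hasRelPos_shift_iff hΦ L.2 L'.2 F.2 hn hjump).1 hA⟩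
    rw [← F.2.sum_jump, sum_congr rfl hjump, ← Nat.cast_sum, ht]

theorem card_middleFlags_eq_card_withJumps (hΦ : LinearMap.BilinForm.Nondegenerate Φ)
    (hrefl : LinearMap.BilinForm.IsRefl Φ) (hh : 1 ≤ h)
    (hn : 2 * h + 1 < n) (hroco : ∀ i ∈ Icc 1 n, roM n A i = coM n C i)
    (hC : ∀ i ∈ Icc 1 n, ∀ j ∈ Icc 1 n, i ≠ j → C i j = R * Eth n (h + 1) h i j)
    {L F : Flags Φ n} {t : ℕ → ℕ} (ht : ∑ u ∈ Icc 1 n, t u = R)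
    (hA : HasRelPos n L.1 F.1 (shift n h (fun u => t u) A)) :
    Nat.card (middleFlags C A L F) = Nat.card (withJumps (L.1 h) (L.1 (h + 1)) F.1 n t) := by
  have hmem (L' : Flags Φ n) := mem_middleFlags_iff_mem_withJumps (L' := L') hΦ hh hn hroco hC ht hA
  have hstep (T : Submodule k V) : replaceStep Φ n h L.1 T h = T := if_pos rfl
  have hmemT (T : withJumps (L.1 h) (L.1 (h + 1)) F.1 n t) :
      replaceStep Φ n h L.1 T h ∈ withJumps (L.1 h) (L.1 (h + 1)) F.1 n t := by
    rw [hstep]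
    exact T.2
  refine Nat.card_congr
    { toFun L' := ⟨L'.1.1 h, ((hmem L'.1).1 L'.2).2⟩
      invFun T := ⟨⟨_, isFlag_replaceStep hΦ hrefl L.2 hh hn T.2.1 T.2.2.1⟩, (hmem _).2
        ⟨expandsAt_replaceStep T.2.1 T.2.2.1, hmemT T⟩⟩
      left_inv L' := Subtype.ext <| Subtype.ext
        (((hmem L'.1).1 L'.2).1.eq_replaceStep L'.1.2 (by omega)).symm
      right_inv T := Subtype.ext (hstep T.1) }

end FiniteDimensional

theorem card_middleFlags [Fintype k] [Finite V] (hΦ : LinearMap.BilinForm.Nondegenerate Φ)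
    (hrefl : LinearMap.BilinForm.IsRefl Φ) (hh : 1 ≤ h) (hn : 2 * h + 1 < n) {A C : ℕ → ℕ → ℤ}
    {R : ℕ} (hroco : ∀ i ∈ Icc 1 n, roM n A i = coM n C i)
    (hC : ∀ i ∈ Icc 1 n, ∀ j ∈ Icc 1 n, i ≠ j → C i j = R * Eth n (h + 1) h i j)
    {L F : Flags Φ n} {t : ℕ → ℕ} (ht : ∑ u ∈ Icc 1 n, t u = R)
    (hA : HasRelPos n L.1 F.1 (shift n h (fun u => t u) A)) :
    (Nat.card (middleFlags C A L F) : ℚ) =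
      (Fintype.card k : ℚ) ^
        (∑ j ∈ Icc 1 n, ∑ u ∈ Icc 1 n, if j < u then A (h + 1) j * (t u : ℤ) else 0) *
      ∏ u ∈ Icc 1 n, qbinom (Fintype.card k) (A (h + 1) u + t u) (t u) := by
  have hjump (u : ℕ) (hu : u ∈ Icc 1 n) :
      jump (L.1 h) (L.1 (h + 1)) F.1 u = A (h + 1) u + t u := by
    have hrow := hA (h + 1) (mem_Icc.2 ⟨by omega, by omega⟩) u hu
    rwa [shift_apply_succ _ A hn hu] at hrow
  rw [card_middleFlags_eq_card_withJumps hΦ hrefl hh hn hroco hC ht hA,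
    card_withJumps (L.2.monotone (Nat.le_succ h)) F.2.monotone F.2.zero_eq_bot F.2.last_eq_top]
  congr 1
  · congr 1
    refine sum_congr rfl fun j hj => sum_congr rfl fun u _ => ?_
    rw [hjump j hj, add_sub_cancel_right]
  · exact prod_congr rfl fun u hu => by rw [hjump u hu]

end Flag

end FlagC

open Finset in
theorem statement2_general {k V : Type*} [Field k] [Fintype k] [AddCommGroup V] [Module k V]
    [FiniteDimensional k V] (Φ : V →ₗ[k] V →ₗ[k] k) (hΦ : LinearMap.BilinForm.Nondegenerate Φ)
    (hrefl : LinearMap.BilinForm.IsRefl Φ) (A C : ℕ → ℕ → ℤ) (n h R : ℕ)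
    (hroco : ∀ i ∈ Icc 1 n, roM n A i = coM n C i) (hh : 1 ≤ h) (hn : 2 * h + 1 < n)
    (hC : ∀ i ∈ Icc 1 n, ∀ j ∈ Icc 1 n, i ≠ j → C i j = (R : ℤ) * Eth n (h + 1) h i j) :
    ∀ LL : Flags Φ n × Flags Φ n,
      conv Φ n (eMat Φ n C) (eMat Φ n A) LL =
      ∑ᶠ t : ℕ → ℕ,
        if t ∈ boundedCompositions n R (A h) then
          (Fintype.card k : ℚ) ^
              (∑ j ∈ Icc 1 n, ∑ u ∈ Icc 1 n, if j < u then A (h + 1) j * (t u : ℤ) else 0) *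
            (∏ u ∈ Icc 1 n, qbinom (Fintype.card k) (A (h + 1) u + t u) (t u)) *
            eMat Φ n (shift n h (fun u => t u) A) LL
        else 0 := by
  rintro ⟨L, F⟩
  have : Finite V := Module.finite_of_finite k
  rw [conv_eMat_eMat]
  by_cases hex : ∃ t ∈ boundedCompositions n R (A h),
      HasRelPos n L.1 F.1 (shift n h (fun u => t u) A)
  · obtain ⟨t, ht, hA⟩ := hex
    rw [card_middleFlags hΦ hrefl hh hn hroco hC ht.2.1 hA]
    rw [finsum_eq_single _ t fun t' hne => ite_eq_right_iff.2 fun ht' => ?_]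
    · rw [if_pos ht, eMat_apply, if_pos hA, mul_one]
    · rw [eMat_apply, if_neg fun hA' => hne (eq_of_hasRelPos_shift hh hn ht' ht hA' hA), mul_zero]
  · have hempty : IsEmpty (middleFlags C A L F) := ⟨fun ⟨_, hL'⟩ =>
      have ⟨⟨hE, hdim⟩, hA⟩ := (mem_middleFlags_iff hΦ hh hn hroco hC).1 hL'
      hex (exists_hasRelPos_shift hΦ hh hn hE hdim hA)⟩
    rw [Nat.card_of_isEmpty, Nat.cast_zero]
    refine (finsum_eq_zero_of_forall_eq_zero fun t => ite_eq_right_iff.2 fun ht => ?_).symm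
    rw [eMat_apply, if_neg fun hA => hex ⟨t, ht, hA⟩, mul_zero]

/-- multiplication by a divided power of `f_h`, `1 ≤ h ≤ r-1`, finite type `C`. -/
theorem statement2 {k V : Type*} [Field k] [Fintype k] [AddCommGroup V] [Module k V]
    [FiniteDimensional k V]
    (hodd : Odd (Fintype.card k))
    (r d : ℕ) (hr : 2 ≤ r) (hd : 1 ≤ d)
    (hdim : Module.finrank k V = 2 * d)
    (Φ : V →ₗ[k] V →ₗ[k] k)
    (halt : ∀ v : V, Φ v v = 0)
    (hnondeg : ∀ v : V, (∀ w : V, Φ v w = 0) → v = 0)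
    (A C : ℕ → ℕ → ℤ)
    (hA : MemXiC (2 * r + 1) d A) (hC : MemXiC (2 * r + 1) d C)
    (hroco : ∀ i ∈ Finset.Icc 1 (2 * r + 1), roM (2 * r + 1) A i = coM (2 * r + 1) C i)
    (h R : ℕ) (hh1 : 1 ≤ h) (hhr : h ≤ r - 1)
    (hCdiag : ∀ i ∈ Finset.Icc 1 (2 * r + 1), ∀ j ∈ Finset.Icc 1 (2 * r + 1), i ≠ j →
      C i j = (R : ℤ) * Eth (2 * r + 1) (h + 1) h i j) :
    ∀ LL : Flags Φ (2 * r + 1) × Flags Φ (2 * r + 1),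
      conv Φ (2 * r + 1) (eMat Φ (2 * r + 1) C) (eMat Φ (2 * r + 1) A) LL =
      ∑ᶠ t : ℕ → ℕ,
        if (∀ u, t u ≠ 0 → u ∈ Finset.Icc 1 (2 * r + 1)) ∧
            (∑ u ∈ Finset.Icc 1 (2 * r + 1), t u = R) ∧
            (∀ u ∈ Finset.Icc 1 (2 * r + 1), (t u : ℤ) ≤ A h u)
        then
          ((Fintype.card k : ℚ) ^
              (∑ j ∈ Finset.Icc 1 (2 * r + 1), ∑ u ∈ Finset.Icc 1 (2 * r + 1),
                if j < u then A (h + 1) j * (t u : ℤ) else 0)) *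
            (∏ u ∈ Finset.Icc 1 (2 * r + 1),
              qbinom (Fintype.card k : ℚ) (A (h + 1) u + (t u : ℤ)) (t u)) *
            eMat Φ (2 * r + 1)
              (fun a b => A a b - ∑ u ∈ Finset.Icc 1 (2 * r + 1),
                (t u : ℤ) * (Eth (2 * r + 1) h u a b - Eth (2 * r + 1) (h + 1) u a b)) LL
        else 0 := by
  intro LL
  have hrefl : LinearMap.BilinForm.IsRefl Φ := LinearMap.IsAlt.isRefl halt
  exact (statement2_general Φ (hrefl.nondegenerate_iff_separatingLeft.2 hnondeg) hrefl A C _ h R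
    hroco hh1 (by omega) hCdiag LL).trans (finsum_congr fun _ => by congr)
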